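/- Let Λc ⊆ Λ be nested lattices in ℝⁿ with finite quotient group Λ/Λc of cardinality M, and let h1, h2 be nonzero coprime integers such that no nonzero element of Λ/Λc has order dividing h1 or h2. Fix P > 0 and let g(w) = (2πP)^{−n/2} exp(−‖w‖²/(2P)). For each coset c of Λc in Λ let G(c) = Σ_{u∈c} g(u). For each coset x of Λc in Λ and w ∈ ℝⁿ define P_x(w) = (1/M) Σ_{cosets y} Σ_{u ∈ x, v ∈ y with h1·u + h2·v = w} (g(u)/G(x))·(g(v)/G(y)), and let P̄(w) = (1/M) Σ_{cosets x} P_x(w). Let ε = ε_{Λc}(√(P/(h1²+h2²))) be the flatness factor of Λc at parameter √(P/(h1²+h2²)). If ε < 1/2, then for every coset x of Λc in Λ, the variational distance satisfies Σ_{w ∈ Λ} |P_x(w) − P̄(w)| ≤ 16ε. -/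

import Mathlib

noncomputable section

/-- The Gaussian density `g(w) = (2πP)^{−n/2}·exp(−‖w‖²/(2P))` on `ℝⁿ`. -/
def gaussDensity {n : ℕ} (P : ℝ) (w : EuclideanSpace ℝ (Fin n)) : ℝ :=
  (2 * Real.pi * P) ^ (-(n : ℝ) / 2) * Real.exp (-‖w‖ ^ 2 / (2 * P))

/-- The coset of `Λc` in `Λ` corresponding to an element `c` of the quotient group `Λ/Λc`,
viewed as a subset of `ℝⁿ`. -/
def coset {n : ℕ} (Λ Λc : Submodule ℤ (EuclideanSpace ℝ (Fin n)))
    (c : Λ ⧸ Λc.comap Λ.subtype) : Set (EuclideanSpace ℝ (Fin n)) :=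
  {u | ∃ hu : u ∈ Λ, (Submodule.Quotient.mk (⟨u, hu⟩ : Λ) : Λ ⧸ Λc.comap Λ.subtype) = c}

/-- The total mass `G(c) = Σ_{u∈c} g(u)` of the Gaussian density on the coset `c`. -/
def cosetMass {n : ℕ} (Λ Λc : Submodule ℤ (EuclideanSpace ℝ (Fin n))) (P : ℝ)
    (c : Λ ⧸ Λc.comap Λ.subtype) : ℝ :=
  ∑' u : coset Λ Λc c, gaussDensity P (u : EuclideanSpace ℝ (Fin n))

/-- The conditional distribution of the relay's observation `W = h₁·U + h₂·V` given the
message (coset) `x`: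
`P_x(w) = (1/M)·Σ_{cosets y} Σ_{u∈x, v∈y, h₁·u+h₂·v=w} (g(u)/G(x))·(g(v)/G(y))`. -/
def condDist {n : ℕ} (Λ Λc : Submodule ℤ (EuclideanSpace ℝ (Fin n))) (P : ℝ) (h₁ h₂ : ℤ)
    (x : Λ ⧸ Λc.comap Λ.subtype) (w : EuclideanSpace ℝ (Fin n)) : ℝ :=
  (1 / (Nat.card (Λ ⧸ Λc.comap Λ.subtype) : ℝ)) *
    ∑' y : Λ ⧸ Λc.comap Λ.subtype,
      ∑' p : {p : EuclideanSpace ℝ (Fin n) × EuclideanSpace ℝ (Fin n) //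
          p.1 ∈ coset Λ Λc x ∧ p.2 ∈ coset Λ Λc y ∧
            (h₁ : ℝ) • p.1 + (h₂ : ℝ) • p.2 = w},
        (gaussDensity P p.val.1 / cosetMass Λ Λc P x) *
          (gaussDensity P p.val.2 / cosetMass Λ Λc P y)

/-- The unconditional distribution `P̄(w) = (1/M)·Σ_{cosets x} P_x(w)` of the observation. -/
def avgDist {n : ℕ} (Λ Λc : Submodule ℤ (EuclideanSpace ℝ (Fin n))) (P : ℝ) (h₁ h₂ : ℤ)
    (w : EuclideanSpace ℝ (Fin n)) : ℝ :=
  (1 / (Nat.card (Λ ⧸ Λc.comap Λ.subtype) : ℝ)) *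
    ∑' x : Λ ⧸ Λc.comap Λ.subtype, condDist Λ Λc P h₁ h₂ x w

/-- The lattice Gaussian sum `g_{z,θ}(L) = Σ_{λ∈L} (2πθ²)^{−n/2}·exp(−‖λ − z‖²/(2θ²))`. -/
def latticeGaussSum {n : ℕ} (L : Set (EuclideanSpace ℝ (Fin n))) (θ : ℝ)
    (z : EuclideanSpace ℝ (Fin n)) : ℝ :=
  ∑' l : L, (2 * Real.pi * θ ^ 2) ^ (-(n : ℝ) / 2) *
    Real.exp (-‖(l : EuclideanSpace ℝ (Fin n)) - z‖ ^ 2 / (2 * θ ^ 2))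

/-- The flatness factor `ε_Λ(θ) = sup_{x∈ℝⁿ} |covol(Λ)·g_{x,θ}(Λ) − 1|` of a full-rank
lattice `Λ`, where `covol(Λ)` is the volume of a fundamental domain of `Λ`. -/
def flatnessFactor {n : ℕ} (Λ : Submodule ℤ (EuclideanSpace ℝ (Fin n))) (θ : ℝ) : ℝ :=
  ⨆ x : EuclideanSpace ℝ (Fin n),
    |ZLattice.covolume Λ * latticeGaussSum (Λ : Set (EuclideanSpace ℝ (Fin n))) θ x - 1|

/-!
Write `Q = P (h₁² + h₂²)` and `θ² = P / (h₁² + h₂²)`. Since `h₁` and `h₂` are coprime, the pairs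
`(u, v) ∈ x × y` with `h₁ u + h₂ v = w` form a single line `(u₀ + h₂ t, v₀ - h₁ t)`, `t ∈ Λc`.
A rotation of `ℝⁿ × ℝⁿ` shows that along it `g_P(u) g_P(v)` equals `g_Q(w)` times a Gaussian of
variance `θ²` in `t`. Flatness of `Λc` at `θ` therefore makes `covol(Λc)` times the mass of these
pairs equal to `g_Q(w)` up to a relative error `ε`, and summing over `w` makes
`covol(Λc) G_P(x) G_P(y)` equal to `G_Q(h₁ x + h₂ y)` up to the same relative error. As
multiplication by `h₂` permutes `Λ/Λc`, each `w` comes from exactly one coset `y`, so every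
`P_x(w)` lies between `(1-ε)/(1+ε)` and `(1+ε)/(1-ε)` times `g_Q(w) / (M G_Q(w + Λc))`, a
probability distribution on `Λ` which does not depend on `x`. The average over `x` lies between the
same bounds, and the two bounds differ by `4ε/(1-ε²)` in total mass.
-/

section LatticeGaussianSums

open Filter Asymptotics

variable {E : Type*} [NormedAddCommGroup E]

lemma exp_neg_mul_norm_sub_sq_le {c : ℝ} (hc : 0 ≤ c) (v z : E) :
    Real.exp (-c * ‖v - z‖ ^ 2) ≤
      Real.exp (c * ‖z‖ ^ 2) * Real.exp (-(c / 2) * ‖v‖ ^ 2) := by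
  rw [← Real.exp_add, Real.exp_le_exp]
  have htri : ‖v‖ ≤ ‖v - z‖ + ‖z‖ := norm_le_norm_sub_add v z
  have hsq : ‖v‖ ^ 2 ≤ 2 * (‖v - z‖ ^ 2 + ‖z‖ ^ 2) :=
    (pow_le_pow_left₀ (norm_nonneg v) htri 2).trans add_sq_le
  nlinarith

variable [NormedSpace ℝ E] [FiniteDimensional ℝ E]

lemma tendsto_norm_coe_sub_cofinite_atTop (L : Submodule ℤ E) [DiscreteTopology L] (z : E) :
    Tendsto (fun l : L => ‖(l : E) - z‖) cofinite atTop := by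
  have : ProperSpace E := FiniteDimensional.proper_real E
  have hcoe : Tendsto ((↑) : L → E) cofinite (cocompact E) :=
    AddSubgroup.tendsto_coe_cofinite_of_discrete L.toAddSubgroup
      (isDiscrete_iff_discreteTopology.mpr ‹_›)
  exact tendsto_atTop_mono (fun l => norm_sub_norm_le (l : E) z)
    (tendsto_atTop_add_const_right _ _ ((tendsto_norm_cocompact_atTop (E := E)).comp hcoe))

lemma summable_exp_neg_mul_norm_sub_sq (L : Submodule ℤ E) [DiscreteTopology L] {c : ℝ}
    (hc : 0 < c) (z : E) : Summable fun l : L => Real.exp (-c * ‖(l : E) - z‖ ^ 2) := by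
  have hdecay : (fun r : ℝ => Real.exp (-c * r ^ 2)) =O[atTop]
      fun r => r ^ (-(Module.finrank ℤ L : ℝ) - 1) := by
    simpa only [zero_mul, add_zero] using
      (rexp_neg_quadratic_isLittleO_rpow_atTop (neg_lt_zero.mpr hc) 0 _).isBigO
  exact summable_of_isBigO (ZLattice.summable_norm_sub_rpow L _ (sub_one_lt _) z)
    (hdecay.comp_tendsto (tendsto_norm_coe_sub_cofinite_atTop L z))

lemma exists_forall_exists_norm_sub_le (L : Submodule ℤ E) [DiscreteTopology L]
    [IsZLattice ℝ L] : ∃ R : ℝ, ∀ z : E, ∃ l : L, ‖z - l‖ ≤ R := by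
  let b := (Module.Free.chooseBasis ℤ L).ofZLatticeBasis ℝ
  have hspan : Submodule.span ℤ (Set.range b) = L :=
    (Module.Free.chooseBasis ℤ L).ofZLatticeBasis_span ℝ
  exact ⟨∑ i, ‖b i‖, fun z =>
    ⟨⟨ZSpan.floor b z, hspan.le (ZSpan.floor b z).2⟩, ZSpan.norm_fract_le b z⟩⟩

lemma bddAbove_range_tsum_exp_neg_mul_norm_sub_sq (L : Submodule ℤ E) [DiscreteTopology L]
    [IsZLattice ℝ L] {c : ℝ} (hc : 0 < c) :
    BddAbove (Set.range fun z : E => ∑' l : L, Real.exp (-c * ‖(l : E) - z‖ ^ 2)) := by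
  obtain ⟨R, hR⟩ := exists_forall_exists_norm_sub_le L
  refine ⟨Real.exp (c * R ^ 2) * ∑' l : L, Real.exp (-(c / 2) * ‖(l : E) - 0‖ ^ 2), ?_⟩
  rintro _ ⟨z, rfl⟩
  obtain ⟨l₀, hl₀⟩ := hR z
  have htranslate : ∑' l : L, Real.exp (-c * ‖(l : E) - z‖ ^ 2) =
      ∑' l : L, Real.exp (-c * ‖(l : E) - (z - l₀)‖ ^ 2) := by
    rw [← (Equiv.addRight l₀).tsum_eq]
    exact tsum_congr fun l => by
      rw [Equiv.coe_addRight, Submodule.coe_add, sub_sub_eq_add_sub]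
  dsimp only
  rw [htranslate, ← tsum_mul_left]
  refine (summable_exp_neg_mul_norm_sub_sq L hc _).tsum_le_tsum (fun l => ?_)
    ((summable_exp_neg_mul_norm_sub_sq L (half_pos hc) 0).mul_left _)
  rw [sub_zero]
  refine (exp_neg_mul_norm_sub_sq_le hc.le (l : E) (z - l₀)).trans ?_
  gcongr

end LatticeGaussianSums

section GaussianDensity

lemma gaussDensity_pos {n : ℕ} {P : ℝ} (hP : 0 < P) (w : EuclideanSpace ℝ (Fin n)) :
    0 < gaussDensity P w := by
  unfold gaussDensity
  positivity

lemma gaussDensity_eq_mul_exp_neg_mul {n : ℕ} (P : ℝ) (w : EuclideanSpace ℝ (Fin n)) :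
    gaussDensity P w =
      (2 * Real.pi * P) ^ (-(n : ℝ) / 2) * Real.exp (-(2 * P)⁻¹ * ‖w‖ ^ 2) := by
  unfold gaussDensity
  ring_nf

lemma summable_gaussDensity_sub {n : ℕ} (L : Submodule ℤ (EuclideanSpace ℝ (Fin n)))
    [DiscreteTopology L] {P : ℝ} (hP : 0 < P) (z : EuclideanSpace ℝ (Fin n)) :
    Summable fun l : L => gaussDensity P ((l : EuclideanSpace ℝ (Fin n)) - z) := by
  simp only [gaussDensity_eq_mul_exp_neg_mul]
  exact (summable_exp_neg_mul_norm_sub_sq L (by positivity) z).mul_left _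

lemma latticeGaussSum_eq_tsum_gaussDensity {n : ℕ} (L : Set (EuclideanSpace ℝ (Fin n))) (θ : ℝ)
    (z : EuclideanSpace ℝ (Fin n)) :
    latticeGaussSum L θ z =
      ∑' l : L, gaussDensity (θ ^ 2) ((l : EuclideanSpace ℝ (Fin n)) - z) :=
  rfl

lemma norm_add_smul_sq_add_norm_sub_smul_sq {F : Type*} [NormedAddCommGroup F]
    [InnerProductSpace ℝ F] {a b : ℝ} (hab : a ^ 2 + b ^ 2 ≠ 0) (u v t : F) :
    ‖u + b • t‖ ^ 2 + ‖v - a • t‖ ^ 2 =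
      ‖a • u + b • v‖ ^ 2 / (a ^ 2 + b ^ 2) +
        (a ^ 2 + b ^ 2) * ‖t - (a ^ 2 + b ^ 2)⁻¹ • (a • v - b • u)‖ ^ 2 := by
  simp only [norm_add_sq_real, norm_sub_sq_real, norm_smul, inner_smul_left, inner_smul_right,
    inner_sub_right, mul_pow, Real.norm_eq_abs, sq_abs, RCLike.conj_to_real,
    real_inner_comm u v, real_inner_comm u t, real_inner_comm v t]
  field_simp
  ring

lemma gaussDensity_add_smul_mul_gaussDensity_sub_smul {n : ℕ} {P a b : ℝ} (hP : 0 < P)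
    (hab : a ^ 2 + b ^ 2 ≠ 0) (u v t : EuclideanSpace ℝ (Fin n)) :
    gaussDensity P (u + b • t) * gaussDensity P (v - a • t) =
      gaussDensity (P * (a ^ 2 + b ^ 2)) (a • u + b • v) *
        gaussDensity (P / (a ^ 2 + b ^ 2))
          (t - (a ^ 2 + b ^ 2)⁻¹ • (a • v - b • u)) := by
  have hsq := norm_add_smul_sq_add_norm_sub_smul_sq hab u v t
  have hH : 0 < a ^ 2 + b ^ 2 := by positivity
  generalize a ^ 2 + b ^ 2 = H at *
  have hconst : (2 * Real.pi * P) ^ (-(n : ℝ) / 2) * (2 * Real.pi * P) ^ (-(n : ℝ) / 2) =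
      (2 * Real.pi * (P * H)) ^ (-(n : ℝ) / 2) * (2 * Real.pi * (P / H)) ^ (-(n : ℝ) / 2) := by
    rw [← Real.mul_rpow (by positivity) (by positivity),
      ← Real.mul_rpow (by positivity) (by positivity)]
    congr 1
    field_simp
  unfold gaussDensity
  rw [mul_mul_mul_comm, hconst, mul_mul_mul_comm (_ ^ _) (Real.exp _) (_ ^ _), ← Real.exp_add,
    ← Real.exp_add, ← add_div, ← neg_add, hsq]
  congr 2
  field_simp
  ring

end GaussianDensity

section FlatnessFactor

variable {n : ℕ}

lemma flatnessFactor_nonneg (L : Submodule ℤ (EuclideanSpace ℝ (Fin n))) (θ : ℝ) :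
    0 ≤ flatnessFactor L θ :=
  Real.iSup_nonneg fun _ => abs_nonneg _

lemma bddAbove_range_latticeGaussSum (L : Submodule ℤ (EuclideanSpace ℝ (Fin n)))
    [DiscreteTopology L] [IsZLattice ℝ L] {θ : ℝ} (hθ : 0 < θ) :
    BddAbove (Set.range (latticeGaussSum (L : Set (EuclideanSpace ℝ (Fin n))) θ)) := by
  obtain ⟨B, hB⟩ := bddAbove_range_tsum_exp_neg_mul_norm_sub_sq L
    (c := (2 * θ ^ 2)⁻¹) (by positivity)
  refine ⟨(2 * Real.pi * θ ^ 2) ^ (-(n : ℝ) / 2) * B, ?_⟩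
  rintro _ ⟨z, rfl⟩
  simp only [latticeGaussSum_eq_tsum_gaussDensity, gaussDensity_eq_mul_exp_neg_mul, tsum_mul_left]
  gcongr
  exact hB ⟨z, rfl⟩

lemma abs_covolume_mul_latticeGaussSum_sub_one_le (L : Submodule ℤ (EuclideanSpace ℝ (Fin n)))
    [DiscreteTopology L] [IsZLattice ℝ L] {θ : ℝ} (hθ : 0 < θ)
    (z : EuclideanSpace ℝ (Fin n)) :
    |ZLattice.covolume L * latticeGaussSum (L : Set (EuclideanSpace ℝ (Fin n))) θ z - 1| ≤
      flatnessFactor L θ := by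
  obtain ⟨B, hB⟩ := bddAbove_range_latticeGaussSum L hθ
  refine le_ciSup (f := fun y => |ZLattice.covolume L *
    latticeGaussSum (L : Set (EuclideanSpace ℝ (Fin n))) θ y - 1|)
    ⟨ZLattice.covolume L * B + 1, ?_⟩ z
  rintro _ ⟨y, rfl⟩
  have hcovol : 0 < ZLattice.covolume L := ZLattice.covolume_pos L
  have hsum : 0 ≤ latticeGaussSum (L : Set (EuclideanSpace ℝ (Fin n))) θ y :=
    tsum_nonneg fun l => (gaussDensity_pos (sq_pos_of_pos hθ) (l.1 - y)).le
  calc |ZLattice.covolume L * latticeGaussSum (L : Set (EuclideanSpace ℝ (Fin n))) θ y - 1|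
      ≤ |ZLattice.covolume L * latticeGaussSum (L : Set (EuclideanSpace ℝ (Fin n))) θ y| + |1| :=
        abs_sub _ _
    _ = ZLattice.covolume L * latticeGaussSum (L : Set (EuclideanSpace ℝ (Fin n))) θ y + 1 := by
        rw [abs_of_nonneg (by positivity), abs_one]
    _ ≤ ZLattice.covolume L * B + 1 := by
        gcongr
        exact hB ⟨y, rfl⟩

end FlatnessFactor

section CoprimeCoefficients

variable {R M : Type*} [CommRing R] [AddCommGroup M] [Module R M] {a b : R}

lemma eq_of_isCoprime_of_smul_eq (hab : IsCoprime a b) {s t : M} (ha : a • s = a • t)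
    (hb : b • s = b • t) : s = t := by
  obtain ⟨c, d, hcd⟩ := hab
  calc s = (c * a + d * b) • s := by rw [hcd, one_smul]
    _ = c • (a • s) + d • (b • s) := by module
    _ = c • (a • t) + d • (b • t) := by rw [ha, hb]
    _ = (c * a + d * b) • t := by module
    _ = t := by rw [hcd, one_smul]

lemma exists_mem_smul_eq_of_smul_add_smul_eq_zero (hab : IsCoprime a b) {N : Submodule R M}
    {u v : M} (hu : u ∈ N) (hv : v ∈ N) (huv : a • u + b • v = 0) :
    ∃ t ∈ N, b • t = u ∧ -(a • t) = v := by
  obtain ⟨c, d, hcd⟩ := hab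
  refine ⟨d • u - c • v, N.sub_mem (N.smul_mem d hu) (N.smul_mem c hv), ?_, ?_⟩
  · calc b • (d • u - c • v) = (c * a + d * b) • u - c • (a • u + b • v) := by module
      _ = u := by rw [hcd, huv, one_smul, smul_zero, sub_zero]
  · calc -(a • (d • u - c • v)) = (c * a + d * b) • v - d • (a • u + b • v) := by module
      _ = v := by rw [hcd, huv, one_smul, smul_zero, sub_zero]

end CoprimeCoefficients

section Cosets

variable {n : ℕ} {Λ Λc : Submodule ℤ (EuclideanSpace ℝ (Fin n))}

lemma coe_mem_coset {w : Λ} {c : Λ ⧸ Λc.comap Λ.subtype} :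
    (w : EuclideanSpace ℝ (Fin n)) ∈ coset Λ Λc c ↔ Submodule.Quotient.mk w = c :=
  ⟨fun ⟨_, hw⟩ => hw, fun hw => ⟨w.2, hw⟩⟩

lemma coset_nonempty (c : Λ ⧸ Λc.comap Λ.subtype) : (coset Λ Λc c).Nonempty := by
  obtain ⟨w, hw⟩ := Submodule.Quotient.mk_surjective _ c
  exact ⟨w, coe_mem_coset.mpr hw⟩

lemma mem_of_mem_coset {u : EuclideanSpace ℝ (Fin n)} {c : Λ ⧸ Λc.comap Λ.subtype}
    (hu : u ∈ coset Λ Λc c) : u ∈ Λ :=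
  hu.1

lemma sub_mem_of_mem_coset {u v : EuclideanSpace ℝ (Fin n)} {c : Λ ⧸ Λc.comap Λ.subtype}
    (hu : u ∈ coset Λ Λc c) (hv : v ∈ coset Λ Λc c) : u - v ∈ Λc := by
  obtain ⟨hu, rfl⟩ := hu
  obtain ⟨hv, hvu⟩ := hv
  exact (Submodule.Quotient.eq (Λc.comap Λ.subtype)).mp hvu.symm

lemma add_mem_coset (hle : Λc ≤ Λ) {u t : EuclideanSpace ℝ (Fin n)}
    {c : Λ ⧸ Λc.comap Λ.subtype} (hu : u ∈ coset Λ Λc c) (ht : t ∈ Λc) :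
    u + t ∈ coset Λ Λc c := by
  obtain ⟨hu, rfl⟩ := hu
  refine ⟨Λ.add_mem hu (hle ht), (Submodule.Quotient.eq _).mpr ?_⟩
  simpa using ht

lemma smul_add_smul_mem_coset {u v : EuclideanSpace ℝ (Fin n)} {x y : Λ ⧸ Λc.comap Λ.subtype}
    (h₁ h₂ : ℤ) (hu : u ∈ coset Λ Λc x) (hv : v ∈ coset Λ Λc y) :
    (h₁ : ℝ) • u + (h₂ : ℝ) • v ∈ coset Λ Λc (h₁ • x + h₂ • y) := by
  obtain ⟨hu, rfl⟩ := hu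
  obtain ⟨hv, rfl⟩ := hv
  rw [Int.cast_smul_eq_zsmul, Int.cast_smul_eq_zsmul]
  exact ⟨Λ.add_mem (Λ.smul_mem h₁ hu) (Λ.smul_mem h₂ hv), rfl⟩

lemma injective_zsmul_quotient {h : ℤ} (horder : ∀ l ∈ Λ, l ∉ Λc → h • l ∉ Λc) :
    Function.Injective fun y : Λ ⧸ Λc.comap Λ.subtype => h • y := by
  refine (injective_iff_map_eq_zero
    (zsmulAddGroupHom h : Λ ⧸ Λc.comap Λ.subtype →+ Λ ⧸ Λc.comap Λ.subtype)).mpr fun y hy => ?_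
  obtain ⟨l, rfl⟩ := Submodule.Quotient.mk_surjective _ y
  rw [zsmulAddGroupHom_apply, ← Submodule.Quotient.mk_smul, Submodule.Quotient.mk_eq_zero] at hy
  rw [Submodule.Quotient.mk_eq_zero]
  by_contra hl
  exact horder l l.2 hl hy

/-- The coset `c`, a subset of `ℝⁿ`, as a fibre of the quotient map `Λ → Λ/Λc`. -/
def cosetEquivFiber (c : Λ ⧸ Λc.comap Λ.subtype) :
    coset Λ Λc c ≃ (Submodule.Quotient.mk : Λ → Λ ⧸ Λc.comap Λ.subtype) ⁻¹' {c} where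
  toFun u := ⟨⟨u, mem_of_mem_coset u.2⟩, coe_mem_coset.mp u.2⟩
  invFun w := ⟨w.1, coe_mem_coset.mpr w.2⟩

variable [DiscreteTopology Λ] {P : ℝ}

lemma summable_gaussDensity (hP : 0 < P) :
    Summable fun w : Λ => gaussDensity P (w : EuclideanSpace ℝ (Fin n)) := by
  simpa only [sub_zero] using summable_gaussDensity_sub Λ hP 0

lemma summable_gaussDensity_coset (hP : 0 < P) (c : Λ ⧸ Λc.comap Λ.subtype) :
    Summable fun u : coset Λ Λc c => gaussDensity P (u : EuclideanSpace ℝ (Fin n)) :=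
  (cosetEquivFiber c).summable_iff.mpr ((summable_gaussDensity hP).subtype _)

lemma cosetMass_pos (hP : 0 < P) (c : Λ ⧸ Λc.comap Λ.subtype) : 0 < cosetMass Λ Λc P c := by
  obtain ⟨u, hu⟩ := coset_nonempty c
  exact (summable_gaussDensity_coset hP c).tsum_pos (fun v => (gaussDensity_pos hP v.1).le)
    ⟨u, hu⟩ (gaussDensity_pos hP u)

variable (Λ Λc P) in
/-- The reference distribution on `Λ`: a uniformly random coset of `Λc`, and in it a point drawn
with probability proportional to the Gaussian density of variance `P`. -/
def uniformCosetGaussian (w : Λ) : ℝ :=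
  gaussDensity P (w : EuclideanSpace ℝ (Fin n)) /
    cosetMass Λ Λc P (Submodule.Quotient.mk w) / Nat.card (Λ ⧸ Λc.comap Λ.subtype)

lemma uniformCosetGaussian_nonneg (hP : 0 < P) (w : Λ) : 0 ≤ uniformCosetGaussian Λ Λc P w :=
  div_nonneg (div_nonneg (gaussDensity_pos hP _).le (cosetMass_pos hP _).le) (Nat.cast_nonneg _)

lemma hasSum_uniformCosetGaussian_fiber (hP : 0 < P) (c : Λ ⧸ Λc.comap Λ.subtype) :
    HasSum (fun w : (Submodule.Quotient.mk : Λ → Λ ⧸ Λc.comap Λ.subtype) ⁻¹' {c} =>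
      uniformCosetGaussian Λ Λc P w) (Nat.card (Λ ⧸ Λc.comap Λ.subtype) : ℝ)⁻¹ := by
  have hcoset (u : coset Λ Λc c) : uniformCosetGaussian Λ Λc P (cosetEquivFiber c u) =
      gaussDensity P (u : EuclideanSpace ℝ (Fin n)) / cosetMass Λ Λc P c /
        Nat.card (Λ ⧸ Λc.comap Λ.subtype) := by
    rw [uniformCosetGaussian, (cosetEquivFiber c u).2]
    rfl
  rw [← (cosetEquivFiber c).hasSum_iff, ← one_div, ← div_self (cosetMass_pos hP c).ne']
  exact (((summable_gaussDensity_coset hP c).hasSum.div_const _).div_const _).congr_fun hcoset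

lemma hasSum_uniformCosetGaussian [Finite (Λ ⧸ Λc.comap Λ.subtype)] (hP : 0 < P) :
    HasSum (uniformCosetGaussian Λ Λc P) 1 := by
  have : Fintype (Λ ⧸ Λc.comap Λ.subtype) := Fintype.ofFinite _
  have hfiber := hasSum_uniformCosetGaussian_fiber (Λ := Λ) (Λc := Λc) hP
  have hquotient : HasSum (fun _ : Λ ⧸ Λc.comap Λ.subtype =>
      (Nat.card (Λ ⧸ Λc.comap Λ.subtype) : ℝ)⁻¹) 1 := by
    have hcard : (Nat.card (Λ ⧸ Λc.comap Λ.subtype) : ℝ) ≠ 0 := mod_cast Nat.card_pos.ne'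
    convert! hasSum_fintype _
    rw [Finset.sum_const, Finset.card_univ, ← Nat.card_eq_fintype_card, nsmul_eq_mul,
      mul_inv_cancel₀ hcard]
  refine (Equiv.sigmaFiberEquiv Submodule.Quotient.mk).hasSum_iff.mp
    (hquotient.sigma_of_hasSum hfiber ?_)
  exact (summable_sigma_of_nonneg fun _ => uniformCosetGaussian_nonneg hP _).mpr
    ⟨fun c => (hfiber c).summable, .of_finite⟩

end Cosets

section PairMass

variable {n : ℕ} (Λ Λc : Submodule ℤ (EuclideanSpace ℝ (Fin n))) (P : ℝ) (h₁ h₂ : ℤ)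
  (x y : Λ ⧸ Λc.comap Λ.subtype) (w : EuclideanSpace ℝ (Fin n))

/-- The variance of each coordinate of `h₁ U + h₂ V` when `U` and `V` are independent Gaussian
vectors of variance `P` per coordinate. -/
def relayVariance : ℝ :=
  P * ((h₁ : ℝ) ^ 2 + (h₂ : ℝ) ^ 2)

/-- The pairs `(u, v) ∈ x × y` observed as `h₁ u + h₂ v = w`. -/
def cosetPairs : Set (EuclideanSpace ℝ (Fin n) × EuclideanSpace ℝ (Fin n)) :=
  {p | p.1 ∈ coset Λ Λc x ∧ p.2 ∈ coset Λ Λc y ∧ (h₁ : ℝ) • p.1 + (h₂ : ℝ) • p.2 = w}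

/-- The unnormalised Gaussian mass of the pairs `(u, v) ∈ x × y` with `h₁ u + h₂ v = w`. -/
def pairMass : ℝ :=
  ∑' p : cosetPairs Λ Λc h₁ h₂ x y w, gaussDensity P p.1.1 * gaussDensity P p.1.2

lemma condDist_eq_tsum_pairMass :
    condDist Λ Λc P h₁ h₂ x w = 1 / (Nat.card (Λ ⧸ Λc.comap Λ.subtype) : ℝ) *
      ∑' y, pairMass Λ Λc P h₁ h₂ x y w / (cosetMass Λ Λc P x * cosetMass Λ Λc P y) := by
  simp only [pairMass, ← tsum_div_const, ← div_mul_div_comm]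
  rfl

variable {Λ Λc P h₁ h₂ x y w}

lemma relayVariance_pos (hP : 0 < P) (hco : IsCoprime h₁ h₂) : 0 < relayVariance P h₁ h₂ := by
  have hsq : (h₁ : ℝ) ^ 2 + (h₂ : ℝ) ^ 2 ≠ 0 := mod_cast hco.sq_add_sq_ne_zero
  unfold relayVariance
  positivity

lemma cosetPairs_eq_empty (hw : w ∉ coset Λ Λc (h₁ • x + h₂ • y)) :
    cosetPairs Λ Λc h₁ h₂ x y w = ∅ :=
  Set.eq_empty_of_forall_notMem fun _ ⟨hu, hv, huv⟩ =>
    hw (huv ▸ smul_add_smul_mem_coset h₁ h₂ hu hv)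

lemma pairMass_eq_zero (hw : w ∉ coset Λ Λc (h₁ • x + h₂ • y)) :
    pairMass Λ Λc P h₁ h₂ x y w = 0 := by
  have : IsEmpty (cosetPairs Λ Λc h₁ h₂ x y w) :=
    Set.isEmpty_coe_sort.mpr (cosetPairs_eq_empty hw)
  exact tsum_empty

lemma cosetPairs_nonempty (hle : Λc ≤ Λ) (hco : IsCoprime h₁ h₂)
    (hw : w ∈ coset Λ Λc (h₁ • x + h₂ • y)) : (cosetPairs Λ Λc h₁ h₂ x y w).Nonempty := by
  obtain ⟨a, b, hab⟩ := hco
  have habR : (a : ℝ) * h₁ + b * h₂ = 1 := mod_cast hab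
  obtain ⟨u, hu⟩ := coset_nonempty x
  obtain ⟨v, hv⟩ := coset_nonempty y
  obtain ⟨d, hd⟩ : ∃ d, d = w - ((h₁ : ℝ) • u + (h₂ : ℝ) • v) := ⟨_, rfl⟩
  have hdΛc : d ∈ Λc := hd ▸ sub_mem_of_mem_coset hw (smul_add_smul_mem_coset h₁ h₂ hu hv)
  refine ⟨(u + a • d, v + b • d), add_mem_coset hle hu (Λc.smul_mem a hdΛc),
    add_mem_coset hle hv (Λc.smul_mem b hdΛc), ?_⟩
  simp only [← Int.cast_smul_eq_zsmul ℝ]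
  calc (h₁ : ℝ) • (u + (a : ℝ) • d) + (h₂ : ℝ) • (v + (b : ℝ) • d)
      = (h₁ : ℝ) • u + (h₂ : ℝ) • v + ((a : ℝ) * h₁ + b * h₂) • d := by module
    _ = w := by rw [habR, one_smul, hd, add_sub_cancel]

lemma add_smul_sub_smul_mem_cosetPairs (hle : Λc ≤ Λ)
    {p : EuclideanSpace ℝ (Fin n) × EuclideanSpace ℝ (Fin n)}
    (hp : p ∈ cosetPairs Λ Λc h₁ h₂ x y w) {t : EuclideanSpace ℝ (Fin n)} (ht : t ∈ Λc) :
    (p.1 + (h₂ : ℝ) • t, p.2 - (h₁ : ℝ) • t) ∈ cosetPairs Λ Λc h₁ h₂ x y w := by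
  obtain ⟨hu, hv, huv⟩ := hp
  refine ⟨add_mem_coset hle hu ?_, ?_, ?_⟩
  · rw [Int.cast_smul_eq_zsmul]
    exact Λc.smul_mem h₂ ht
  · rw [sub_eq_add_neg, Int.cast_smul_eq_zsmul ℝ h₁]
    exact add_mem_coset hle hv (Λc.neg_mem (Λc.smul_mem h₁ ht))
  · rw [← huv]
    module

lemma bijective_add_smul_sub_smul_cosetPairs (hle : Λc ≤ Λ) (hco : IsCoprime h₁ h₂)
    {p : EuclideanSpace ℝ (Fin n) × EuclideanSpace ℝ (Fin n)}
    (hp : p ∈ cosetPairs Λ Λc h₁ h₂ x y w) :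
    Function.Bijective fun t : Λc => (⟨(p.1 + (h₂ : ℝ) • t, p.2 - (h₁ : ℝ) • t),
      add_smul_sub_smul_mem_cosetPairs hle hp t.2⟩ : cosetPairs Λ Λc h₁ h₂ x y w) := by
  constructor
  · intro s t hst
    simp only [Subtype.mk.injEq, Prod.mk.injEq, add_right_inj, sub_right_inj,
      Int.cast_smul_eq_zsmul] at hst
    exact Subtype.ext (eq_of_isCoprime_of_smul_eq hco hst.2 hst.1)
  · rintro ⟨q, hq⟩
    have hdiff : h₁ • (q.1 - p.1) + h₂ • (q.2 - p.2) = 0 := by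
      simp only [← Int.cast_smul_eq_zsmul ℝ]
      calc _ = ((h₁ : ℝ) • q.1 + (h₂ : ℝ) • q.2) - ((h₁ : ℝ) • p.1 + (h₂ : ℝ) • p.2) := by module
        _ = 0 := by rw [hq.2.2, hp.2.2, sub_self]
    obtain ⟨t, ht, hu, hv⟩ := exists_mem_smul_eq_of_smul_add_smul_eq_zero hco
      (sub_mem_of_mem_coset hq.1 hp.1) (sub_mem_of_mem_coset hq.2.1 hp.2.1) hdiff
    refine ⟨⟨t, ht⟩, Subtype.ext (Prod.ext ?_ ?_)⟩
    · simp only [Int.cast_smul_eq_zsmul, hu, add_sub_cancel]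
    · simp only [Int.cast_smul_eq_zsmul, sub_eq_add_neg p.2, hv, add_sub_cancel]

lemma pairMass_eq_gaussDensity_mul_latticeGaussSum (hle : Λc ≤ Λ) (hP : 0 < P)
    (hco : IsCoprime h₁ h₂) {p : EuclideanSpace ℝ (Fin n) × EuclideanSpace ℝ (Fin n)}
    (hp : p ∈ cosetPairs Λ Λc h₁ h₂ x y w) :
    pairMass Λ Λc P h₁ h₂ x y w =
      gaussDensity (relayVariance P h₁ h₂) w *
        latticeGaussSum Λc (√(P / ((h₁ : ℝ) ^ 2 + (h₂ : ℝ) ^ 2)))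
          (((h₁ : ℝ) ^ 2 + (h₂ : ℝ) ^ 2)⁻¹ • ((h₁ : ℝ) • p.2 - (h₂ : ℝ) • p.1)) := by
  have hH : (h₁ : ℝ) ^ 2 + (h₂ : ℝ) ^ 2 ≠ 0 := mod_cast hco.sq_add_sq_ne_zero
  rw [pairMass, latticeGaussSum_eq_tsum_gaussDensity, Real.sq_sqrt (by positivity),
    ← (Equiv.ofBijective _ (bijective_add_smul_sub_smul_cosetPairs hle hco hp)).tsum_eq,
    ← tsum_mul_left]
  exact tsum_congr fun t =>
    (gaussDensity_add_smul_mul_gaussDensity_sub_smul hP hH p.1 p.2 t).trans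
      (by rw [hp.2.2, relayVariance])

lemma hasSum_pairMass [DiscreteTopology Λ] (hP : 0 < P) (h₁ h₂ : ℤ)
    (x y : Λ ⧸ Λc.comap Λ.subtype) :
    HasSum (fun w : coset Λ Λc (h₁ • x + h₂ • y) => pairMass Λ Λc P h₁ h₂ x y w)
      (cosetMass Λ Λc P x * cosetMass Λ Λc P y) := by
  have hx := summable_gaussDensity_coset hP x
  have hy := summable_gaussDensity_coset hP y
  have hprod := hx.hasSum.mul hy.hasSum <|
    hx.mul_of_nonneg hy (fun u => (gaussDensity_pos hP u.1).le)
      fun v => (gaussDensity_pos hP v.1).le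
  let observe (p : coset Λ Λc x × coset Λ Λc y) : coset Λ Λc (h₁ • x + h₂ • y) :=
    ⟨_, smul_add_smul_mem_coset h₁ h₂ p.1.2 p.2.2⟩
  convert! hprod.tsum_fiberwise observe using 2 with w
  let e : observe ⁻¹' {w} ≃ cosetPairs Λ Λc h₁ h₂ x y w :=
    { toFun p := ⟨(p.1.1, p.1.2), p.1.1.2, p.1.2.2, congrArg Subtype.val p.2⟩
      invFun p := ⟨(⟨p.1.1, p.2.1⟩, ⟨p.1.2, p.2.2.1⟩), Subtype.ext p.2.2.2⟩ }
  exact (e.tsum_eq _).symm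

lemma condDist_eq_pairMass_div
    (hinj : Function.Injective fun y : Λ ⧸ Λc.comap Λ.subtype => h₂ • y)
    (hw : w ∈ coset Λ Λc (h₁ • x + h₂ • y)) :
    condDist Λ Λc P h₁ h₂ x w =
      pairMass Λ Λc P h₁ h₂ x y w / (cosetMass Λ Λc P x * cosetMass Λ Λc P y) /
        Nat.card (Λ ⧸ Λc.comap Λ.subtype) := by
  rw [condDist_eq_tsum_pairMass, one_div_mul_eq_div, tsum_eq_single y]
  intro z hz
  rw [pairMass_eq_zero, zero_div]
  exact fun hwz => hz (hinj (add_left_cancel (hwz.2.symm.trans hw.2)))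

end PairMass

section RelativeError

/-- The range of a quotient of two quantities which are each known up to a relative error `ε`, when
the quotient of the approximations is `r`. -/
def relErrorIcc (ε r : ℝ) : Set ℝ :=
  Set.Icc ((1 - ε) / (1 + ε) * r) ((1 + ε) / (1 - ε) * r)

lemma div_mem_relErrorIcc_of_abs_sub_le {ε a b c d : ℝ} (hε₀ : 0 ≤ ε) (hε₁ : ε < 1) (hb : 0 ≤ b)
    (hd : 0 < d) (hab : |a - b| ≤ ε * b) (hcd : |c - d| ≤ ε * d) :
    a / c ∈ relErrorIcc ε (b / d) := by
  obtain ⟨hab₁, hab₂⟩ := abs_le.mp hab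
  obtain ⟨hcd₁, hcd₂⟩ := abs_le.mp hcd
  have hε : 0 < 1 - ε := sub_pos.mpr hε₁
  have hd' : 0 < (1 - ε) * d := mul_pos hε hd
  have hb' : 0 ≤ (1 - ε) * b := mul_nonneg hε.le hb
  rw [relErrorIcc, div_mul_div_comm, div_mul_div_comm]
  constructor
  · exact div_le_div₀ (by linarith) (by linarith) (by linarith) (by linarith)
  · exact div_le_div₀ (by positivity) (by linarith) hd' (by linarith)

lemma div_mem_relErrorIcc_div {ε a r m : ℝ} (hm : 0 ≤ m) (ha : a ∈ relErrorIcc ε r) :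
    a / m ∈ relErrorIcc ε (r / m) := by
  rw [relErrorIcc, ← mul_div_assoc, ← mul_div_assoc]
  exact ⟨div_le_div_of_nonneg_right ha.1 hm, div_le_div_of_nonneg_right ha.2 hm⟩

lemma tsum_abs_sub_le_of_mem_Icc {ι : Type*} {f g q : ι → ℝ} {a b : ℝ} (hq : HasSum q 1)
    (hf : ∀ i, f i ∈ Set.Icc (a * q i) (b * q i)) (hg : ∀ i, g i ∈ Set.Icc (a * q i) (b * q i)) :
    ∑' i, |f i - g i| ≤ b - a := by
  have hbound (i : ι) : ‖|f i - g i|‖ ≤ (b - a) * q i := by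
    rw [norm_abs_eq_norm, sub_mul]
    exact Real.dist_le_of_mem_Icc (hf i) (hg i)
  have hsum : HasSum (fun i => (b - a) * q i) (b - a) := by
    simpa only [mul_one] using hq.mul_left (b - a)
  exact (le_abs_self _).trans (tsum_of_norm_bounded hsum hbound)

lemma one_add_div_one_sub_sub {ε : ℝ} (hε₀ : 0 ≤ ε) (hε₁ : ε < 1) :
    (1 + ε) / (1 - ε) - (1 - ε) / (1 + ε) = 4 * ε / (1 - ε ^ 2) := by
  have hsub : 1 - ε ≠ 0 := (sub_pos.mpr hε₁).ne'
  have hadd : 1 + ε ≠ 0 := (add_pos_of_pos_of_nonneg one_pos hε₀).ne'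
  rw [div_sub_div _ _ hsub hadd]
  ring

lemma four_mul_div_one_sub_sq_le {ε : ℝ} (hε₀ : 0 ≤ ε) (hε : ε ≤ 1 / 2) :
    4 * ε / (1 - ε ^ 2) ≤ 16 * ε := by
  rw [div_le_iff₀ (by nlinarith)]
  nlinarith

end RelativeError

section RelayDistributions

variable {n : ℕ} {Λ Λc : Submodule ℤ (EuclideanSpace ℝ (Fin n))} {P : ℝ} {h₁ h₂ : ℤ}

variable (Λc P h₁ h₂) in
/-- The flatness factor `ε` of `Λc` at the standard deviation `√(P / (h₁² + h₂²))` of the pair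
`(u, v)` along the line `h₁ u + h₂ v = w`, measured in the line parameter `t`. -/
def relayFlatness : ℝ :=
  flatnessFactor Λc (√(P / ((h₁ : ℝ) ^ 2 + (h₂ : ℝ) ^ 2)))

lemma abs_covolume_mul_pairMass_sub_le [DiscreteTopology Λc] [IsZLattice ℝ Λc] (hle : Λc ≤ Λ)
    (hP : 0 < P) (hco : IsCoprime h₁ h₂) {x y : Λ ⧸ Λc.comap Λ.subtype}
    {w : EuclideanSpace ℝ (Fin n)} (hw : w ∈ coset Λ Λc (h₁ • x + h₂ • y)) :
    |ZLattice.covolume Λc * pairMass Λ Λc P h₁ h₂ x y w -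
        gaussDensity (relayVariance P h₁ h₂) w| ≤
      relayFlatness Λc P h₁ h₂ * gaussDensity (relayVariance P h₁ h₂) w := by
  have hH : (h₁ : ℝ) ^ 2 + (h₂ : ℝ) ^ 2 ≠ 0 := mod_cast hco.sq_add_sq_ne_zero
  obtain ⟨p, hp⟩ := cosetPairs_nonempty hle hco hw
  have hg : 0 < gaussDensity (relayVariance P h₁ h₂) w :=
    gaussDensity_pos (relayVariance_pos hP hco) w
  rw [pairMass_eq_gaussDensity_mul_latticeGaussSum hle hP hco hp, mul_left_comm, ← mul_sub_one,
    abs_mul, abs_of_pos hg, mul_comm]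
  exact mul_le_mul_of_nonneg_right
    (abs_covolume_mul_latticeGaussSum_sub_one_le Λc (Real.sqrt_pos.mpr (by positivity)) _) hg.le

variable [DiscreteTopology Λ] [DiscreteTopology Λc] [IsZLattice ℝ Λc]

lemma abs_covolume_mul_cosetMass_mul_cosetMass_sub_le (hle : Λc ≤ Λ) (hP : 0 < P)
    (hco : IsCoprime h₁ h₂) (x y : Λ ⧸ Λc.comap Λ.subtype) :
    |ZLattice.covolume Λc * (cosetMass Λ Λc P x * cosetMass Λ Λc P y) -
        cosetMass Λ Λc (relayVariance P h₁ h₂) (h₁ • x + h₂ • y)| ≤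
      relayFlatness Λc P h₁ h₂ *
        cosetMass Λ Λc (relayVariance P h₁ h₂) (h₁ • x + h₂ • y) := by
  have hpairs := (hasSum_pairMass (Λc := Λc) hP h₁ h₂ x y).mul_left (ZLattice.covolume Λc)
  have hgauss :=
    (summable_gaussDensity_coset (relayVariance_pos hP hco) (h₁ • x + h₂ • y)).hasSum
  exact (hpairs.sub hgauss).norm_le_of_bounded (hgauss.mul_left _)
    fun w => abs_covolume_mul_pairMass_sub_le hle hP hco w.2

lemma pairMass_div_mem_relErrorIcc (hle : Λc ≤ Λ) (hP : 0 < P) (hco : IsCoprime h₁ h₂)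
    (hε : relayFlatness Λc P h₁ h₂ < 1) {x y : Λ ⧸ Λc.comap Λ.subtype}
    {w : EuclideanSpace ℝ (Fin n)} (hw : w ∈ coset Λ Λc (h₁ • x + h₂ • y)) :
    pairMass Λ Λc P h₁ h₂ x y w / (cosetMass Λ Λc P x * cosetMass Λ Λc P y) ∈
      relErrorIcc (relayFlatness Λc P h₁ h₂)
        (gaussDensity (relayVariance P h₁ h₂) w /
          cosetMass Λ Λc (relayVariance P h₁ h₂) (h₁ • x + h₂ • y)) := by
  have hQ := relayVariance_pos hP hco
  rw [← mul_div_mul_left (pairMass Λ Λc P h₁ h₂ x y w) _ (ZLattice.covolume_pos Λc).ne']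
  exact div_mem_relErrorIcc_of_abs_sub_le (flatnessFactor_nonneg _ _) hε (gaussDensity_pos hQ w).le
    (cosetMass_pos hQ _) (abs_covolume_mul_pairMass_sub_le hle hP hco hw)
    (abs_covolume_mul_cosetMass_mul_cosetMass_sub_le hle hP hco x y)

variable [Finite (Λ ⧸ Λc.comap Λ.subtype)]

lemma condDist_mem_relErrorIcc (hle : Λc ≤ Λ) (hP : 0 < P) (hco : IsCoprime h₁ h₂)
    (horder : ∀ l ∈ Λ, l ∉ Λc → h₂ • l ∉ Λc) (hε : relayFlatness Λc P h₁ h₂ < 1)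
    (x : Λ ⧸ Λc.comap Λ.subtype) (w : Λ) :
    condDist Λ Λc P h₁ h₂ x w ∈ relErrorIcc (relayFlatness Λc P h₁ h₂)
      (uniformCosetGaussian Λ Λc (relayVariance P h₁ h₂) w) := by
  have hinj := injective_zsmul_quotient horder
  obtain ⟨y, hy⟩ := Finite.surjective_of_injective hinj (Submodule.Quotient.mk w - h₁ • x)
  have hwy : Submodule.Quotient.mk w = h₁ • x + h₂ • y := (add_eq_of_eq_sub' hy).symm
  have hw := coe_mem_coset.mpr hwy
  rw [condDist_eq_pairMass_div hinj hw, uniformCosetGaussian, hwy]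
  exact div_mem_relErrorIcc_div (Nat.cast_nonneg _) (pairMass_div_mem_relErrorIcc hle hP hco hε hw)

lemma avgDist_mem_relErrorIcc (hle : Λc ≤ Λ) (hP : 0 < P) (hco : IsCoprime h₁ h₂)
    (horder : ∀ l ∈ Λ, l ∉ Λc → h₂ • l ∉ Λc) (hε : relayFlatness Λc P h₁ h₂ < 1) (w : Λ) :
    avgDist Λ Λc P h₁ h₂ w ∈ relErrorIcc (relayFlatness Λc P h₁ h₂)
      (uniformCosetGaussian Λ Λc (relayVariance P h₁ h₂) w) := by
  have : Fintype (Λ ⧸ Λc.comap Λ.subtype) := Fintype.ofFinite _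
  have hweights : ∑ _x : Λ ⧸ Λc.comap Λ.subtype,
      1 / (Nat.card (Λ ⧸ Λc.comap Λ.subtype) : ℝ) = 1 := by
    simp [Nat.card_eq_fintype_card]
  rw [avgDist, tsum_fintype, Finset.mul_sum]
  exact (convex_Icc _ _).sum_mem (fun _ _ => by positivity) hweights
    fun x _ => condDist_mem_relErrorIcc hle hP hco horder hε x w

end RelayDistributions

theorem stmt_1_general {n : ℕ} (Λ Λc : Submodule ℤ (EuclideanSpace ℝ (Fin n)))
    [DiscreteTopology Λ] [DiscreteTopology Λc] [IsZLattice ℝ Λc] (hle : Λc ≤ Λ)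
    [Finite (Λ ⧸ Λc.comap Λ.subtype)] (h₁ h₂ : ℤ) (hco : IsCoprime h₁ h₂)
    (horder : ∀ l ∈ Λ, l ∉ Λc → h₂ • l ∉ Λc) (P : ℝ) (hP : 0 < P)
    (hε : relayFlatness Λc P h₁ h₂ < 1) (x : Λ ⧸ Λc.comap Λ.subtype) :
    ∑' w : Λ, |condDist Λ Λc P h₁ h₂ x w - avgDist Λ Λc P h₁ h₂ w| ≤
      4 * relayFlatness Λc P h₁ h₂ / (1 - relayFlatness Λc P h₁ h₂ ^ 2) := by
  refine le_of_le_of_eq ?_ (one_add_div_one_sub_sub (flatnessFactor_nonneg _ _) hε)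
  exact tsum_abs_sub_le_of_mem_Icc (hasSum_uniformCosetGaussian (relayVariance_pos hP hco))
    (condDist_mem_relErrorIcc hle hP hco horder hε x)
    (avgDist_mem_relErrorIcc hle hP hco horder hε)

/-- **variational-distance bound.** Let `Λc ⊆ Λ` be nested lattices in `ℝⁿ`
with finite quotient `Λ/Λc` of cardinality `M`, and let `h₁, h₂` be nonzero coprime integers
such that no nonzero element of `Λ/Λc` has order dividing `h₁` or `h₂`. Fix `P > 0` and let
`ε = ε_{Λc}(√(P/(h₁²+h₂²)))` be the flatness factor of `Λc`. If `ε < 1/2`, then for every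
coset `x` of `Λc` in `Λ`, the variational distance between the conditional law `P_x` of
`W = h₁·U + h₂·V` and its average `P̄` satisfies `Σ_{w∈Λ} |P_x(w) − P̄(w)| ≤ 16ε`. -/
theorem stmt_1 {n : ℕ} (Λ Λc : Submodule ℤ (EuclideanSpace ℝ (Fin n)))
    [DiscreteTopology Λ] [DiscreteTopology Λc] [IsZLattice ℝ Λc] (hle : Λc ≤ Λ)
    [Finite (Λ ⧸ Λc.comap Λ.subtype)] (M : ℕ) (hM : Nat.card (Λ ⧸ Λc.comap Λ.subtype) = M)
    (h₁ h₂ : ℤ) (hh₁ : h₁ ≠ 0) (hh₂ : h₂ ≠ 0) (hco : IsCoprime h₁ h₂)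
    (horder : ∀ l ∈ Λ, l ∉ Λc → h₁ • l ∉ Λc ∧ h₂ • l ∉ Λc)
    (P : ℝ) (hP : 0 < P)
    (hε : flatnessFactor Λc (Real.sqrt (P / ((h₁ : ℝ) ^ 2 + (h₂ : ℝ) ^ 2))) < 1 / 2) :
    ∀ x : Λ ⧸ Λc.comap Λ.subtype,
      (∑' w : Λ, |condDist Λ Λc P h₁ h₂ x (w : EuclideanSpace ℝ (Fin n)) -
          avgDist Λ Λc P h₁ h₂ (w : EuclideanSpace ℝ (Fin n))|) ≤
        16 * flatnessFactor Λc (Real.sqrt (P / ((h₁ : ℝ) ^ 2 + (h₂ : ℝ) ^ 2))) := by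
  exact fun x =>
    (stmt_1_general Λ Λc hle h₁ h₂ hco (fun l hl hlc => (horder l hl hlc).2) P hP
      (hε.trans one_half_lt_one) x).trans
    (four_mul_div_one_sub_sq_le (flatnessFactor_nonneg _ _) hε.le)

end
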